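/- arXiv:1605.00912 — 2 statements merged into one kernel-verified Lean document; each statement's English description precedes it below -/
import Mathlib

section
/- For an s-rectifiable random vector x ∈ ℝ^m and any n > s, for Lebesgue almost all A ∈ ℝ^{n×m} there exists a Borel measurable decoder g_A : ℝ^n → ℝ^m with P[g_A(Ax) ≠ x] = 0. -/
open MeasureTheory Filter Set Metric Bornology Matrix Pointwise
noncomputable def matVec {n m : ℕ} (A : Fin n → Fin m → ℝ) (x : EuclideanSpace ℝ (Fin m)) :
    EuclideanSpace ℝ (Fin n) :=
  (EuclideanSpace.equiv (Fin n) ℝ).symm (Matrix.mulVec (Matrix.of A) (EuclideanSpace.equiv (Fin m) ℝ x))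
def IsRectifiableSet (s m : ℕ) (U : Set (EuclideanSpace ℝ (Fin m))) : Prop :=
  MeasurableSet U ∧
  ∃ (A : ℕ → Set (EuclideanSpace ℝ (Fin s)))
    (φ : ℕ → EuclideanSpace ℝ (Fin s) → EuclideanSpace ℝ (Fin m)),
    (∀ i, (A i).Nonempty ∧ IsBounded (A i) ∧ MeasurableSet (A i) ∧
      ∃ K : NNReal, LipschitzOnWith K (φ i) (A i)) ∧
    μH[(s : ℝ)] (U \ ⋃ i, φ i '' A i) = 0

def IsRectifiableRV (s m : ℕ) {Ω : Type*} [MeasureSpace Ω] (x : Ω → EuclideanSpace ℝ (Fin m)) : Prop :=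
  Measurable x ∧ ∃ U : Set (EuclideanSpace ℝ (Fin m)), IsRectifiableSet s m U ∧
    volume (x ⁻¹' U) = 1 ∧ Measure.map x volume ≪ μH[(s : ℝ)]

/-!
A rectifiable set `U` of dimension `s < n` is null for the `n`-dimensional Hausdorff measure. Inner
regularity replaces `U` by a σ-compact subset still carrying the law of `x`. If a vector `v` with
`ℓ v ≠ 0` is killed by `A + ℓ(·) c`, then `c = -(ℓ v)⁻¹ A v`; as `v` runs through a null set `S`,
these `c` form a locally Lipschitz image of a part of `S`, hence a null set. By Fubini, almost no
`A` kills a nonzero vector of `S`. Applied to `S = U - a`, this says that for each fixed `a` almost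
no `A` maps another point of `U` to `A a`. A second use of Fubini exchanges the quantifiers: for
almost every `A`, almost every value `a` of `x` is determined within `U` by `A a`. So `A` is
injective on a Borel set of full measure, and by Lusin–Souslin its inverse there extends to a Borel
decoder.
-/

lemma isClosed_setOf_exists_mem_of_isCompact {X Y : Type*} [TopologicalSpace X]
    [TopologicalSpace Y] {K : Set Y} (hK : IsCompact K) {C : Set (X × Y)} (hC : IsClosed C) :
    IsClosed {x | ∃ y ∈ K, (x, y) ∈ C} := by
  have : CompactSpace K := isCompact_iff_compactSpace.1 hK
  have himage : {x | ∃ y ∈ K, (x, y) ∈ C} =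
      Prod.fst '' {q : X × K | (q.1, (q.2 : Y)) ∈ C} := by
    ext x
    simp
  rw [himage]
  exact isClosedMap_fst_of_compactSpace _ (hC.preimage (by fun_prop))

-- The complement is Fσ: it is the projection of an Fσ set along a σ-compact set.
lemma measurableSet_setOf_forall_mem_imp_of_isSigmaCompact {X Y : Type*} [PseudoEMetricSpace X]
    [PseudoEMetricSpace Y] [MeasurableSpace X] [OpensMeasurableSpace X] {S : Set Y}
    (hS : IsSigmaCompact S) {p q : X → Y → Prop} (hp : IsClosed {z : X × Y | p z.1 z.2})
    (hq : IsClosed {z : X × Y | q z.1 z.2}) :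
    MeasurableSet {x | ∀ y ∈ S, p x y → q x y} := by
  obtain ⟨K, hK, rfl⟩ := hS
  obtain ⟨G, hG, -, hGq, -⟩ := hq.isOpen_compl.exists_iUnion_isClosed
  have hcompl : {x | ∀ y ∈ ⋃ i, K i, p x y → q x y}ᶜ =
      ⋃ (i) (j), {x | ∃ y ∈ K i, (x, y) ∈ {z : X × Y | p z.1 z.2} ∩ G j} := by
    have hnot (x : X) (y : Y) : ¬ q x y ↔ ∃ j, (x, y) ∈ G j := by
      rw [← mem_iUnion, hGq, mem_compl_iff, mem_ofPred_eq]
    ext x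
    simp only [mem_compl_iff, mem_ofPred_eq, mem_iUnion, mem_inter_iff]
    push Not
    simp only [hnot]
    tauto
  refine .of_compl ?_
  rw [hcompl]
  exact .iUnion fun i => .iUnion fun j =>
    (isClosed_setOf_exists_mem_of_isCompact (hK i) (hp.inter (hG j))).measurableSet

lemma exists_isSigmaCompact_subset_ae_mem {X : Type*} [TopologicalSpace X] [T2Space X]
    [MeasurableSpace X] [OpensMeasurableSpace X] {μ : Measure X} [IsFiniteMeasure μ]
    [μ.InnerRegularCompactLTTop] {s : Set X} (hs : MeasurableSet s) (hμs : ∀ᵐ x ∂μ, x ∈ s) :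
    ∃ K ⊆ s, IsSigmaCompact K ∧ MeasurableSet K ∧ ∀ᵐ x ∂μ, x ∈ K := by
  have happrox (k : ℕ) : ∃ K ⊆ s, IsCompact K ∧ μ (s \ K) < (k : ENNReal)⁻¹ :=
    hs.exists_isCompact_sdiff_lt (measure_ne_top μ s) (by simp)
  choose K hKs hK hμK using happrox
  refine ⟨⋃ k, K k, iUnion_subset hKs, ⟨K, hK, rfl⟩, .iUnion fun k => (hK k).measurableSet, ?_⟩
  have hnull : μ (s \ ⋃ k, K k) = 0 := by
    by_contra hpos
    obtain ⟨k, hk⟩ := ENNReal.exists_inv_nat_lt hpos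
    have hmono : μ (s \ ⋃ k, K k) ≤ μ (s \ K k) :=
      measure_mono (sdiff_subset_sdiff_right (subset_iUnion K k))
    exact (hk.trans_le hmono).not_gt (hμK k)
  filter_upwards [hμs, measure_eq_zero_iff_ae_notMem.1 hnull] with x hxs hxK
  by_contra hx
  exact hxK ⟨hxs, hx⟩

lemma exists_measurable_leftInvOn {X Y : Type*} [MeasurableSpace X] [StandardBorelSpace X]
    [Nonempty X] [MeasurableSpace Y] [MeasurableSpace.CountablySeparated Y] {f : X → Y}
    (hf : Measurable f) {s : Set X} (hs : MeasurableSet s) (hinj : InjOn f s) :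
    ∃ g : Y → X, Measurable g ∧ LeftInvOn g f s := by
  have := hs.standardBorel
  have hemb : MeasurableEmbedding (s.domRestrict f) :=
    (hf.comp measurable_subtype_coe).measurableEmbedding (injOn_iff_injective.1 hinj)
  obtain ⟨g, hg, hgf⟩ := hemb.exists_measurable_extend measurable_subtype_coe fun _ => ‹Nonempty X›
  exact ⟨g, hg, fun x hx => congrFun hgf ⟨x, hx⟩⟩

lemma hausdorffMeasure_image_eq_zero_of_locally_lipschitzOn {X Y : Type*} [EMetricSpace X]
    [EMetricSpace Y] [MeasurableSpace X] [BorelSpace X] [MeasurableSpace Y] [BorelSpace Y]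
    [SecondCountableTopology X] {d : ℝ} (hd : 0 ≤ d) {f : X → Y} {s : Set X}
    (hf : ∀ x ∈ s, ∃ C : NNReal, ∃ t ∈ nhdsWithin x s, LipschitzOnWith C f t)
    (hs : μH[d] s = 0) : μH[d] (f '' s) = 0 := by
  suffices OuterMeasure.comap f (μH[d] : Measure Y).toOuterMeasure s = 0 by simpa using this
  refine measure_null_of_locally_null s fun x hx => ?_
  obtain ⟨C, t, ht, hC⟩ := hf x hx
  refine ⟨t ∩ s, inter_mem ht self_mem_nhdsWithin, ?_⟩
  have hle := (hC.mono inter_subset_left).hausdorffMeasure_image_le (s := t ∩ s) hd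
  simpa [measure_mono_null inter_subset_right hs] using hle

lemma hausdorffMeasure_image_inv_smul_eq_zero {E F : Type*} [NormedAddCommGroup E]
    [NormedSpace ℝ E] [SecondCountableTopology E] [MeasurableSpace E] [BorelSpace E]
    [NormedAddCommGroup F] [NormedSpace ℝ F] [MeasurableSpace F] [BorelSpace F] {d : ℝ}
    (hd : 0 ≤ d) {S : Set E} (hS : μH[d] S = 0) (A : E →L[ℝ] F) (ℓ : E →L[ℝ] ℝ) :
    μH[d] ((fun v => (ℓ v)⁻¹ • A v) '' (S ∩ {v | ℓ v ≠ 0})) = 0 := by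
  refine hausdorffMeasure_image_eq_zero_of_locally_lipschitzOn hd (fun v hv => ?_)
    (measure_mono_null inter_subset_left hS)
  have hsmooth : ContDiffAt ℝ 1 (fun v => (ℓ v)⁻¹ • A v) v :=
    (ℓ.contDiff.contDiffAt.inv hv.2).smul A.contDiff.contDiffAt
  obtain ⟨C, t, ht, hC⟩ := hsmooth.exists_lipschitzOnWith
  exact ⟨C, t, mem_nhdsWithin_of_mem_nhds ht, hC⟩

section LinearMeasurements

open Module

variable {E F : Type*} [NormedAddCommGroup E] [NormedSpace ℝ E] [FiniteDimensional ℝ E]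
  [MeasurableSpace E] [BorelSpace E] [NormedAddCommGroup F] [NormedSpace ℝ F]

lemma measurableSet_setOf_forall_eq_of_apply_eq {S : Set E} (hS : IsSigmaCompact S) :
    MeasurableSet {p : E × (E →L[ℝ] F) | ∀ b ∈ S, p.2 b = p.2 p.1 → b = p.1} :=
  measurableSet_setOf_forall_mem_imp_of_isSigmaCompact hS
    (isClosed_eq (by fun_prop) (by fun_prop)) (isClosed_eq (by fun_prop) (by fun_prop))

variable [FiniteDimensional ℝ F] [MeasurableSpace F] [BorelSpace F]

lemma ae_forall_functional_eq_zero_of_apply_eq_zero {S : Set E} (hS : IsSigmaCompact S)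
    (hS₀ : μH[finrank ℝ F] S = 0) (ℓ : E →L[ℝ] ℝ) (ν : Measure (E →L[ℝ] F))
    [ν.IsAddHaarMeasure] : ∀ᵐ A ∂ν, ∀ v ∈ S, A v = 0 → ℓ v = 0 := by
  have hmeas : MeasurableSet {A : E →L[ℝ] F | ∀ v ∈ S, A v = 0 → ℓ v = 0} :=
    measurableSet_setOf_forall_mem_imp_of_isSigmaCompact hS
      (isClosed_eq (by fun_prop) continuous_const) (isClosed_eq (by fun_prop) continuous_const)
  refine ae_mem_of_ae_add_linearMap_mem (ℓ.smulRightₗ (T := ℝ)) μH[finrank ℝ F] ν hmeas fun A => ?_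
  have hnull := hausdorffMeasure_image_inv_smul_eq_zero (Nat.cast_nonneg _) hS₀ (-A) ℓ
  filter_upwards [measure_eq_zero_iff_ae_notMem.1 hnull] with c hc v hv hker
  by_contra hℓv
  have hsum : A v + ℓ v • c = 0 := hker
  exact hc ⟨v, ⟨hv, hℓv⟩, by simp [eq_neg_of_add_eq_zero_left hsum, inv_smul_smul₀ hℓv]⟩

lemma ae_forall_eq_zero_of_apply_eq_zero {S : Set E} (hS : IsSigmaCompact S)
    (hS₀ : μH[finrank ℝ F] S = 0) (ν : Measure (E →L[ℝ] F)) [ν.IsAddHaarMeasure] :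
    ∀ᵐ A ∂ν, ∀ v ∈ S, A v = 0 → v = 0 := by
  let b := finBasis ℝ E
  have hcoord : ∀ᵐ A ∂ν, ∀ i, ∀ v ∈ S, A v = 0 → b.coord i v = 0 :=
    ae_all_iff.2 fun i =>
      ae_forall_functional_eq_zero_of_apply_eq_zero hS hS₀ (b.coord i).toContinuousLinearMap ν
  filter_upwards [hcoord] with A hA v hv hAv
  exact b.forall_coord_eq_zero_iff.1 fun i => hA i v hv hAv

lemma ae_forall_eq_of_apply_eq {S : Set E} (hS : IsSigmaCompact S)
    (hS₀ : μH[finrank ℝ F] S = 0) (ν : Measure (E →L[ℝ] F)) [ν.IsAddHaarMeasure] (a : E) :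
    ∀ᵐ A ∂ν, ∀ b ∈ S, A b = A a → b = a := by
  have hdiff : IsSigmaCompact ((· - a) '' S) := hS.image (continuous_sub_right a)
  have hdiff₀ : μH[finrank ℝ F] ((· - a) '' S) = 0 :=
    ((IsometryEquiv.subRight a).hausdorffMeasure_image _ S).trans hS₀
  filter_upwards [ae_forall_eq_zero_of_apply_eq_zero hdiff hdiff₀ ν] with A hA b hb hab
  exact sub_eq_zero.1 (hA _ (mem_image_of_mem _ hb) (by rw [map_sub, hab, sub_self]))

theorem achievability_rectifiable_general {Ω : Type*} [MeasurableSpace Ω] {P : Measure Ω}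
    [SFinite P] {x : Ω → E} (hx : AEMeasurable x P) {U : Set E} (hU : μH[finrank ℝ F] U = 0)
    (hxU : ∀ᵐ ω ∂P, x ω ∈ U) (ν : Measure (E →L[ℝ] F)) [ν.IsAddHaarMeasure] :
    ∀ᵐ A ∂ν, ∃ g : F → E, Measurable g ∧ ∀ᵐ ω ∂P, g (A (x ω)) = x ω := by
  obtain ⟨V, hUV, hV, hV₀⟩ := exists_measurable_superset_of_null hU
  obtain ⟨Q, _, hPQ, hQP⟩ := exists_isFiniteMeasure_absolutelyContinuous P
  replace hx := hx.mono_ac hQP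
  have hxV : ∀ᵐ a ∂Q.map x, a ∈ V :=
    (ae_map_iff hx hV).2 ((hxU.filter_mono hQP.ae_le).mono fun _ hω => hUV hω)
  obtain ⟨K, hKV, hK, hKmeas, hxK⟩ := exists_isSigmaCompact_subset_ae_mem hV hxV
  have hmeas := measurableSet_setOf_forall_eq_of_apply_eq (F := F) hK
  have hae : ∀ᵐ A ∂ν, ∀ᵐ a ∂Q.map x, ∀ b ∈ K, A b = A a → b = a :=
    (Measure.ae_ae_comm hmeas).1 <| ae_of_all _ <|
      ae_forall_eq_of_apply_eq hK (measure_mono_null hKV hV₀) ν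
  filter_upwards [hae] with A hA
  obtain ⟨g, hg, hgA⟩ := exists_measurable_leftInvOn A.continuous.measurable
    (hKmeas.inter (measurable_prodMk_right hmeas)) fun a ha b hb hab => hb.2 a ha.1 hab
  exact ⟨g, hg, ((ae_of_ae_map hx (hxK.and hA)).mono fun _ hω => hgA hω).filter_mono hPQ.ae_le⟩

end LinearMeasurements

lemma IsRectifiableSet.dimH_le {s m : ℕ} {U : Set (EuclideanSpace ℝ (Fin m))}
    (hU : IsRectifiableSet s m U) : dimH U ≤ s := by
  obtain ⟨-, A, φ, hφ, hnull⟩ := hU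
  have himage (i : ℕ) : dimH (φ i '' A i) ≤ s := by
    obtain ⟨-, -, -, K, hK⟩ := hφ i
    calc dimH (φ i '' A i) ≤ dimH (A i) := hK.dimH_image_le
      _ ≤ dimH univ := dimH_mono (subset_univ _)
      _ = s := by simp [Real.dimH_univ_eq_finrank]
  have hrest : dimH (U \ ⋃ i, φ i '' A i) ≤ s :=
    dimH_le_of_hausdorffMeasure_ne_top (d := s) (by simp [hnull])
  calc dimH U ≤ dimH ((⋃ i, φ i '' A i) ∪ U \ ⋃ i, φ i '' A i) := dimH_mono (by simp)
    _ ≤ s := by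
      rw [dimH_union, dimH_iUnion]
      exact max_le (iSup_le himage) hrest

lemma IsRectifiableSet.hausdorffMeasure_eq_zero {s m : ℕ} {U : Set (EuclideanSpace ℝ (Fin m))}
    (hU : IsRectifiableSet s m U) {d : NNReal} (hd : s < d) : μH[d] U = 0 :=
  hausdorffMeasure_of_dimH_lt (hU.dimH_le.trans_lt (by exact_mod_cast hd))

/-- The identification of matrices, parametrized by their entries, with the linear maps that they
induce through `matVec`; it transports Lebesgue measure to an additive Haar measure. -/
noncomputable def matVecEquiv (n m : ℕ) :
    (Fin n → Fin m → ℝ) ≃L[ℝ] (EuclideanSpace ℝ (Fin m) →L[ℝ] EuclideanSpace ℝ (Fin n)) :=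
  ((Matrix.ofLinearEquiv ℝ).trans
    (Matrix.toEuclideanLin.trans LinearMap.toContinuousLinearMap)).toContinuousLinearEquiv

lemma matVecEquiv_apply {n m : ℕ} (A : Fin n → Fin m → ℝ) (v : EuclideanSpace ℝ (Fin m)) :
    matVecEquiv n m A v = matVec A v := rfl

theorem achievability_rectifiable {s m n : ℕ} {Ω : Type*} [MeasureSpace Ω]
    [IsProbabilityMeasure (volume : Measure Ω)]
    (x : Ω → EuclideanSpace ℝ (Fin m)) (h : IsRectifiableRV s m x) (hn : s < n) :
    ∀ᵐ A : Fin n → Fin m → ℝ,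
      ∃ g : EuclideanSpace ℝ (Fin n) → EuclideanSpace ℝ (Fin m), Measurable g ∧
        volume {ω : Ω | g (matVec A (x ω)) ≠ x ω} = 0 := by
  obtain ⟨hx, U, hU, hxU, -⟩ := h
  have hU₀ : μH[Module.finrank ℝ (EuclideanSpace ℝ (Fin n))] U = 0 := by
    simpa using hU.hausdorffMeasure_eq_zero (d := n) (by exact_mod_cast hn)
  have hmem : ∀ᵐ ω, x ω ∈ U := (mem_ae_iff_prob_eq_one (hx hU.1)).2 hxU
  have := (matVecEquiv n m).isAddHaarMeasure_map volume
  have hdecoder := ae_of_ae_map (matVecEquiv n m).continuous.aemeasurable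
    (achievability_rectifiable_general hx.aemeasurable hU₀ hmem (volume.map (matVecEquiv n m)))
  simpa only [matVecEquiv_apply, ae_iff] using hdecoder
end

section
/- There exist a C^1 function κ : ℝ^2 → ℝ and a bounded Borel set A ⊆ ℝ^2 with 0 < Lebesgue measure of A < ∞ such that κ is injective on A. -/
open MeasureTheory Filter Set Metric Bornology Matrix Pointwise

/-!
Some sequence of closed balls separates points, so a point is determined by the binary digits `d n`
recording which of these balls contain it, and the digits are in turn determined by the Cantor
series `∑ n, c ^ e n * d n` with `0 < c < 1 / 2` and `e` strictly increasing. Replace the indicator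
of each ball by a smooth bump which differs from it only on an annulus, choosing the annuli thin
enough to have small total measure. The series of bumps is smooth as soon as `e` grows fast enough,
and off the annuli it still determines the point.
-/

open scoped ContDiff Topology ENNReal

lemma cantorFunction_extend_decide {ι : Type*} {c : ℝ} {e : ι → ℕ} (he : Function.Injective e)
    {d : ι → ℝ} (hd : ∀ i, d i = 0 ∨ d i = 1) :
    Cardinal.cantorFunction c (Function.extend e (fun i ↦ decide (d i = 1)) fun _ ↦ false) =
      ∑' i, c ^ e i * d i := by
  rw [Cardinal.cantorFunction, ← he.tsum_eq]
  · refine tsum_congr fun i ↦ ?_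
    rcases hd i with h | h <;> simp [Cardinal.cantorFunctionAux, he.extend_apply, h]
  · intro m hm
    by_contra hme
    exact hm (Cardinal.cantorFunctionAux_false (Function.extend_apply' _ _ _ hme))

lemma eq_of_tsum_pow_mul_eq {ι : Type*} {c : ℝ} (hc₀ : 0 < c) (hc₁ : c < 1 / 2) {e : ι → ℕ}
    (he : Function.Injective e) {d d' : ι → ℝ} (hd : ∀ i, d i = 0 ∨ d i = 1)
    (hd' : ∀ i, d' i = 0 ∨ d' i = 1) (h : ∑' i, c ^ e i * d i = ∑' i, c ^ e i * d' i) :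
    d = d' := by
  rw [← cantorFunction_extend_decide he hd, ← cantorFunction_extend_decide he hd'] at h
  have hdigits : (fun i ↦ decide (d i = 1)) = fun i ↦ decide (d' i = 1) :=
    Function.extend_injective he _ (Cardinal.cantorFunction_injective hc₀ hc₁ h)
  ext i
  have hi : d i = 1 ↔ d' i = 1 := by simpa using congrFun hdigits i
  rcases hd i with h₀ | h₁
  · rcases hd' i with h₀' | h₁'
    · rw [h₀, h₀']
    · rw [hi.2 h₁', h₁']
  · rw [h₁, hi.1 h₁]

section Smooth

variable {E F : Type*} [NormedAddCommGroup E] [NormedSpace ℝ E] [NormedAddCommGroup F]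
  [NormedSpace ℝ F]

lemma exists_norm_iteratedFDeriv_le_of_hasCompactSupport {f : E → F} (hf : ContDiff ℝ ∞ f)
    (hfs : HasCompactSupport f) (n : ℕ) :
    ∃ M, ∀ k ≤ n, ∀ x, ‖iteratedFDeriv ℝ k f x‖ ≤ M := by
  have hbound (k : ℕ) : ∃ M, ∀ x, ‖iteratedFDeriv ℝ k f x‖ ≤ M :=
    (hf.continuous_iteratedFDeriv (mod_cast le_top)).bounded_above_of_compact_support
      (hfs.iteratedFDeriv k)
  choose M hM using hbound
  obtain ⟨C, hC⟩ := ((finite_Iic n).image M).bddAbove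
  exact ⟨C, fun k hk x ↦ (hM k x).trans (hC (mem_image_of_mem M hk))⟩

lemma exists_strictMono_contDiff_tsum_pow_smul [CompleteSpace F] {c : ℝ} (hc : |c| < 1)
    {f : ℕ → E → F} (hf : ∀ n, ContDiff ℝ ∞ (f n)) (hfs : ∀ n, HasCompactSupport (f n)) :
    ∃ e : ℕ → ℕ, StrictMono e ∧ ContDiff ℝ ∞ fun x ↦ ∑' n, c ^ e n • f n x := by
  choose M hM using fun n ↦ exists_norm_iteratedFDeriv_le_of_hasCompactSupport (hf n) (hfs n) n
  have hsmall (n : ℕ) : ∀ᶠ m in atTop, |c| ^ m * M n ≤ (1 / 2) ^ n := by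
    have hlim : Tendsto (fun m ↦ |c| ^ m * M n) atTop (𝓝 0) := by
      simpa using (tendsto_pow_atTop_nhds_zero_of_lt_one (abs_nonneg c) hc).mul_const (M n)
    exact hlim.eventually_le_const (by positivity)
  obtain ⟨e, he, heM⟩ := extraction_forall_of_eventually hsmall
  refine ⟨e, he, contDiff_tsum_of_eventually (v := fun _ n ↦ (1 / 2) ^ n)
    (fun n ↦ (hf n).const_smul _) (fun _ _ ↦ summable_geometric_two) fun k _ ↦ ?_⟩
  rw [Nat.cofinite_eq_atTop]
  filter_upwards [eventually_ge_atTop k] with n hkn x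
  have hfk : ContDiffAt ℝ k (f n) x := ((hf n).of_le (mod_cast le_top)).contDiffAt
  calc ‖iteratedFDeriv ℝ k (fun y ↦ c ^ e n • f n y) x‖
      = |c| ^ e n * ‖iteratedFDeriv ℝ k (f n) x‖ := by
        rw [iteratedFDeriv_const_smul_apply' hfk, norm_smul, norm_pow, Real.norm_eq_abs]
    _ ≤ |c| ^ e n * M n := by gcongr; exact hM n k hkn x
    _ ≤ (1 / 2) ^ n := heM n

end Smooth

lemma exists_seq_closedBall_separating (X : Type*) [MetricSpace X]
    [TopologicalSpace.SeparableSpace X] [Nonempty X] :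
    ∃ (z : ℕ → X) (r : ℕ → ℝ), (∀ n, 0 < r n) ∧
      ∀ x y, x ≠ y → ∃ n, x ∈ closedBall (z n) (r n) ∧ y ∉ closedBall (z n) (r n) := by
  obtain ⟨q, hq⟩ := TopologicalSpace.exists_dense_seq (X × Ioi (0 : ℝ))
  refine ⟨fun n ↦ (q n).1, fun n ↦ (q n).2, fun n ↦ (q n).2.2, fun x y hxy ↦ ?_⟩
  have hxy' : 0 < dist x y := dist_pos.2 hxy
  have hopen : IsOpen {p : X × Ioi (0 : ℝ) | dist x p.1 < p.2 ∧ (p.2 : ℝ) < dist y p.1} :=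
    .and (isOpen_lt (by fun_prop) (by fun_prop)) (isOpen_lt (by fun_prop) (by fun_prop))
  obtain ⟨n, hxn, hyn⟩ := hq.exists_mem_open hopen
    ⟨(x, ⟨dist x y / 2, half_pos hxy'⟩), by simpa using hxy,
      by simpa only [dist_comm y x] using half_lt_self hxy'⟩
  exact ⟨n, hxn.le, hyn.not_ge⟩

lemma exists_measure_ball_diff_closedBall_lt {X : Type*} [PseudoMetricSpace X] [ProperSpace X]
    [MeasurableSpace X] [OpensMeasurableSpace X] (μ : Measure X) [IsFiniteMeasureOnCompacts μ]
    (x : X) (r : ℝ) {ε : ℝ≥0∞} (hε : ε ≠ 0) :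
    ∃ R > r, μ (ball x R \ closedBall x r) < ε := by
  have hempty : ⋂ R > r, ball x R \ closedBall x r = ∅ := by
    refine eq_empty_of_forall_notMem fun y hy ↦ ?_
    have hy' : ∀ R > r, dist y x < R ∧ r < dist y x := by simpa using hy
    obtain ⟨-, hry⟩ := hy' (r + 1) (lt_add_one r)
    exact (hy' _ hry).1.false
  have hlim : Tendsto (fun R ↦ μ (ball x R \ closedBall x r)) (𝓝[>] r) (𝓝 0) := by
    rw [← measure_empty (μ := μ), ← hempty]
    exact tendsto_measure_biInter_gt
      (fun _ _ ↦ (measurableSet_ball.diff measurableSet_closedBall).nullMeasurableSet)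
      (fun _ _ _ hRS ↦ sdiff_subset_sdiff_left (ball_subset_ball hRS))
      ⟨r + 1, lt_add_one r, (measure_mono sdiff_subset |>.trans_lt measure_ball_lt_top).ne⟩
  obtain ⟨R, hR, hrR⟩ :=
    ((hlim.eventually_lt_const (pos_iff_ne_zero.2 hε)).and self_mem_nhdsWithin).exists
  exact ⟨R, hrR, hR⟩

section Injective

variable {E : Type*} [NormedAddCommGroup E] [NormedSpace ℝ E] [FiniteDimensional ℝ E]
  [MeasurableSpace E] [OpensMeasurableSpace E]

lemma exists_seq_contDiffBump_separating (μ : Measure E) [IsFiniteMeasureOnCompacts μ]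
    {ε : ℝ≥0∞} (hε : ε ≠ 0) :
    ∃ (z : ℕ → E) (φ : ∀ n, ContDiffBump (z n)),
      (∀ x y, x ≠ y →
        ∃ n, x ∈ closedBall (z n) (φ n).rIn ∧ y ∉ closedBall (z n) (φ n).rIn) ∧
      μ (⋃ n, ball (z n) (φ n).rOut \ closedBall (z n) (φ n).rIn) < ε := by
  obtain ⟨z, r, hr, hsep⟩ := exists_seq_closedBall_separating E
  obtain ⟨δ, hδ, hδε⟩ := ENNReal.exists_pos_sum_of_countable' hε ℕ
  choose R hrR hR using fun n ↦
    exists_measure_ball_diff_closedBall_lt μ (z n) (r n) (hδ n).ne'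
  exact ⟨z, fun n ↦ ⟨r n, R n, hr n, hrR n⟩, hsep,
    (measure_iUnion_le _).trans_lt ((ENNReal.tsum_le_tsum fun n ↦ (hR n).le).trans_lt hδε)⟩

lemma exists_contDiff_injOn_measure_compl_lt (μ : Measure E) [IsFiniteMeasureOnCompacts μ]
    {ε : ℝ≥0∞} (hε : ε ≠ 0) :
    ∃ κ : E → ℝ, ContDiff ℝ ∞ κ ∧ ∃ A : Set E, IsClosed A ∧ μ Aᶜ < ε ∧ InjOn κ A := by
  obtain ⟨z, φ, hsep, hμ⟩ := exists_seq_contDiffBump_separating μ hε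
  obtain ⟨e, he, hκ⟩ := exists_strictMono_contDiff_tsum_pow_smul (c := 1 / 3)
    (by norm_num [abs_of_pos]) (fun n ↦ (φ n).contDiff) fun n ↦ (φ n).hasCompactSupport
  set A : Set E := (⋃ n, ball (z n) (φ n).rOut \ closedBall (z n) (φ n).rIn)ᶜ
  have hone {x : E} {n : ℕ} (hx : x ∈ closedBall (z n) (φ n).rIn) : φ n x = 1 :=
    (φ n).one_of_mem_closedBall hx
  have hzero {x : E} (hx : x ∈ A) {n : ℕ} (hxn : x ∉ closedBall (z n) (φ n).rIn) :
      φ n x = 0 :=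
    (φ n).zero_of_le_dist (not_lt.1 fun hlt ↦ hx (mem_iUnion.2 ⟨n, hlt, hxn⟩))
  have hdigit {x : E} (hx : x ∈ A) (n : ℕ) : φ n x = 0 ∨ φ n x = 1 :=
    (em' _).imp (hzero hx) hone
  refine ⟨_, hκ, A, ?_, by rwa [compl_compl], fun x hx y hy hxy ↦ ?_⟩
  · exact (isOpen_iUnion fun n ↦ isOpen_ball.sdiff isClosed_closedBall).isClosed_compl
  · by_contra hne
    obtain ⟨n, hxn, hyn⟩ := hsep x y hne
    have heq : (fun n ↦ φ n x) = fun n ↦ φ n y :=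
      eq_of_tsum_pow_mul_eq (by norm_num) (by norm_num) he.injective (hdigit hx) (hdigit hy) hxy
    have hcontra : (1 : ℝ) = 0 := by rw [← hone hxn, congrFun heq n, hzero hy hyn]
    exact one_ne_zero hcontra

theorem exists_C1_injective_on_positive_measure_set_general (μ : Measure E)
    [IsFiniteMeasureOnCompacts μ] [NeZero μ] :
    ∃ κ : E → ℝ, ContDiff ℝ ∞ κ ∧ ∃ A : Set E, IsCompact A ∧ 0 < μ A ∧ InjOn κ A := by
  obtain ⟨n, hn⟩ := exists_pos_ball (0 : E) (NeZero.ne μ)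
  obtain ⟨κ, hκ, A, hA, hμA, hinj⟩ := exists_contDiff_injOn_measure_compl_lt μ hn.ne'
  refine ⟨κ, hκ, closedBall 0 n ∩ A, (isCompact_closedBall 0 _).inter_right hA, ?_,
    hinj.mono inter_subset_right⟩
  calc 0 < μ (ball 0 n) - μ Aᶜ := tsub_pos_of_lt hμA
    _ ≤ μ (ball 0 n \ Aᶜ) := le_measure_sdiff
    _ = μ (ball 0 n ∩ A) := by rw [sdiff_compl]
    _ ≤ μ (closedBall 0 n ∩ A) := by grw [ball_subset_closedBall]

end Injective

theorem exists_C1_injective_on_positive_measure_set :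
    ∃ κ : EuclideanSpace ℝ (Fin 2) → ℝ, ContDiff ℝ 1 κ ∧
      ∃ A : Set (EuclideanSpace ℝ (Fin 2)), IsBounded A ∧ MeasurableSet A ∧
        0 < volume A ∧ volume A < ⊤ ∧ Set.InjOn κ A := by
  obtain ⟨κ, hκ, A, hA, hpos, hinj⟩ := exists_C1_injective_on_positive_measure_set_general
    (volume : Measure (EuclideanSpace ℝ (Fin 2)))
  exact ⟨κ, hκ.of_le (mod_cast le_top), A, hA.isBounded, hA.measurableSet, hpos,
    hA.measure_lt_top, hinj⟩
end
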